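/- Let α > 0 and m ≥ 1. For any vectors w_1, …, w_m ∈ ℝ^K with all components negative and any vectors u_1, …, u_m ∈ ℝ^K with all components positive, writing w̄ = (1/m)∑_{i=1}^m w_i and ū = (1/m)∑_{i=1}^m u_i, it holds that (1/m)∑_{i=1}^m [Φ_α(w_i) − ⟨w_i, u_i⟩] ≥ F_α(ū) − (1/m)∑_{i=1}^m ⟨w_i − w̄, u_i⟩. -/

import Mathlib

/-!
The scalar Fenchel–Young inequality `F_α(a) + w a ≤ φ_α(w)` (for `w < 0 < a`) is weighted AM–GM
(or `log x ≤ x - 1` when `α = 1`). Applying it, coordinate by coordinate, to every `w_i` with the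
*same* point `a = ū_k` and averaging over `i` gives `(1/m) ∑ Φ_α(w_i) ≥ F_α(ū) + ⟨w̄, ū⟩`.
Since `Φ_α` is a supremum of affine functions, this contains the Jensen step, so the convexity of
`Φ_α` is not needed separately. The claim follows from `⟨w̄, ū⟩ = (1/m) ∑ ⟨w̄, u_i⟩`.
-/

/-- The generalized α-fairness function on `ℝ^K` (equation (1) of the paper). -/
noncomputable def Falpha {K : ℕ} (α : ℝ) (u : Fin K → ℝ) : ℝ :=
  if α = 1 then ∑ k, Real.log (u k)
  else ∑ k, ((u k) ^ (1 - α) - 1) / (1 - α)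

/-- Scalar conjugate term `φ_α` on `(-∞, 0)`. -/
noncomputable def phiAlpha (α : ℝ) (w : ℝ) : ℝ :=
  if α = 1 then -Real.log (-w) - 1
  else (α * (-w) ^ (1 - 1 / α) - 1) / (1 - α)

/-- `Φ_α(w) = ∑_k φ_α(w_k)`, the convex conjugate `(-F_α)^⋆`. -/
noncomputable def PhiAlpha {K : ℕ} (α : ℝ) (w : Fin K → ℝ) : ℝ :=
  ∑ k, phiAlpha α (w k)

/-- Scalar Fenchel–Young inequality for `α ≠ 1`, with `v = -w`. -/
lemma fenchel_young_rpow {α v a : ℝ} (hα : 0 < α) (h1 : α ≠ 1) (hv : 0 < v) (ha : 0 < a) :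
    (a ^ (1 - α) - 1) / (1 - α) - v * a ≤ (α * v ^ (1 - 1 / α) - 1) / (1 - α) := by
  rcases lt_or_gt_of_ne h1 with h | h
  · have hb : 0 < 1 - α := by linarith
    have key := Real.geom_mean_le_arith_mean2_weighted hα.le hb.le
      (Real.rpow_nonneg hv.le (1 - 1 / α)) (mul_pos hv ha).le (by ring)
    have e : (v ^ (1 - 1 / α)) ^ α * (v * a) ^ (1 - α) = a ^ (1 - α) := by
      rw [← Real.rpow_mul hv.le, Real.mul_rpow hv.le ha.le, ← mul_assoc, ← Real.rpow_add hv]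
      have : (1 - 1 / α) * α + (1 - α) = 0 := by field_simp; ring
      rw [this, Real.rpow_zero, one_mul]
    rw [e] at key
    rw [sub_le_iff_le_add, div_add' _ _ _ hb.ne', div_le_div_iff_of_pos_right hb]
    linarith
  · have hb : 0 < α - 1 := by linarith
    have hi : 1 / α ≤ 1 := by rw [div_le_one hα]; exact h.le
    have key := Real.geom_mean_le_arith_mean2_weighted (w₁ := 1 / α) (w₂ := 1 - 1 / α)
      (by positivity) (by linarith)
      (Real.rpow_nonneg ha.le (1 - α)) (mul_pos hv ha).le (by ring)
    have e : (a ^ (1 - α)) ^ (1 / α) * (v * a) ^ (1 - 1 / α) = v ^ (1 - 1 / α) := by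
      rw [← Real.rpow_mul ha.le, Real.mul_rpow hv.le ha.le, mul_left_comm, ← Real.rpow_add ha]
      have : (1 - α) * (1 / α) + (1 - 1 / α) = 0 := by field_simp; ring
      rw [this, Real.rpow_zero, mul_one]
    rw [e] at key
    have key2 : α * v ^ (1 - 1 / α) ≤ a ^ (1 - α) + (α - 1) * (v * a) := by
      calc α * v ^ (1 - 1 / α)
          ≤ α * (1 / α * a ^ (1 - α) + (1 - 1 / α) * (v * a)) :=
            mul_le_mul_of_nonneg_left key hα.le
        _ = _ := by field_simp
    have hn : 1 - α < 0 := by linarith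
    rw [sub_le_iff_le_add, div_add' _ _ _ hn.ne, div_le_div_right_of_neg hn]
    linarith

/-- The summand of `Falpha`, as a function of one coordinate. -/
noncomputable def fairScalar (α a : ℝ) : ℝ :=
  if α = 1 then Real.log a else (a ^ (1 - α) - 1) / (1 - α)

lemma Falpha_eq_sum {K : ℕ} (α : ℝ) (u : Fin K → ℝ) :
    Falpha α u = ∑ k, fairScalar α (u k) := by
  unfold Falpha fairScalar
  split_ifs <;> rfl

lemma fenchel_young_scalar {α w a : ℝ} (hα : 0 < α) (hw : w < 0) (ha : 0 < a) :
    fairScalar α a + w * a ≤ phiAlpha α w := by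
  have hv : 0 < -w := by linarith
  unfold fairScalar phiAlpha
  split_ifs with h
  · have := Real.log_le_sub_one_of_pos (mul_pos hv ha)
    rw [Real.log_mul hv.ne' ha.ne'] at this
    linarith
  · have := fenchel_young_rpow hα h hv ha
    linarith

/-- steps (i)–(ii) of the appendix proof of Theorem 1: for negative `w_i` and
positive `u_i`, with `w̄` and `ū` the averages,
`(1/m) ∑_i [Φ_α(w_i) − ⟨w_i, u_i⟩] ≥ F_α(ū) − (1/m) ∑_i ⟨w_i − w̄, u_i⟩`. -/
theorem jensen_fenchel_young_step
    (K m : ℕ) (hm : 1 ≤ m) (α : ℝ) (hα : 0 < α)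
    (w : Fin m → Fin K → ℝ) (hw : ∀ i k, w i k < 0)
    (u : Fin m → Fin K → ℝ) (hu : ∀ i k, 0 < u i k) :
    (1 / (m : ℝ)) * ∑ i, (PhiAlpha α (w i) - ∑ k, w i k * u i k) ≥
      Falpha α (fun k => (1 / (m : ℝ)) * ∑ i, u i k) -
        (1 / (m : ℝ)) * ∑ i, ∑ k, (w i k - (1 / (m : ℝ)) * ∑ j, w j k) * u i k := by
  have hm0 : (0 : ℝ) < m := by exact_mod_cast hm
  have : Nonempty (Fin m) := ⟨⟨0, hm⟩⟩
  rw [Falpha_eq_sum]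
  unfold PhiAlpha
  simp only [← Finset.sum_sub_distrib]
  rw [Finset.sum_comm, Finset.sum_comm (s := Finset.univ (α := Fin m)), Finset.mul_sum,
    Finset.mul_sum, ← Finset.sum_sub_distrib]
  refine Finset.sum_le_sum fun k _ => ?_
  have hū : 0 < (1 / (m : ℝ)) * ∑ i, u i k :=
    mul_pos (by positivity) (Finset.sum_pos (fun i _ => hu i k) Finset.univ_nonempty)
  have key := Finset.sum_le_sum fun i (_ : i ∈ Finset.univ) =>
    fenchel_young_scalar hα (hw i k) hū
  simp only [Finset.sum_add_distrib, Finset.sum_const, Finset.card_univ, Fintype.card_fin,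
    nsmul_eq_mul, ← Finset.sum_mul] at key
  simp only [sub_mul, Finset.sum_sub_distrib, ← Finset.mul_sum]
  have key2 := mul_le_mul_of_nonneg_left key (by positivity : 0 ≤ 1 / (m : ℝ))
  have e : 1 / (m : ℝ) * (m * fairScalar α (1 / (m : ℝ) * ∑ i, u i k)) =
      fairScalar α (1 / (m : ℝ) * ∑ i, u i k) := by
    rw [← mul_assoc, one_div_mul_cancel hm0.ne', one_mul]
  rw [mul_add, e] at key2
  linarith
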